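/- Let 𝒢 denote the set of nondegenerate Gaussian laws on ℝ^d (arbitrary mean, positive-definite covariance) and 𝓛 the set of laws on ℝ^d with log-concave Lebesgue density; note 𝒢 ⊆ 𝓛. If a nonnegative adapted process {M_t} on Ω is a nonnegative supermartingale for P^∞ for every P ∈ 𝒢, then {M_t} is 𝚪-almost surely nonincreasing: 𝚪(∃ t ≥ 1 : M_t > M_{t−1}) = 0; if it is a nonnegative martingale for every P^∞ with P ∈ 𝒢, then 𝚪(∃ t ≥ 1 : M_t ≠ M_{t−1}) = 0. A fortiori, the same conclusions hold for processes that are nonnegative supermartingales (resp. martingales) for P^∞ for every P ∈ 𝓛. -/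

import Mathlib

open MeasureTheory ProbabilityTheory Filter Finset Matrix
open scoped Classical

noncomputable section

namespace SeqTest

/-- `ℝ^d`. -/
abbrev RV (d : ℕ) := Fin d → ℝ

/-- The sequence space `Ω = (ℝ^d)^ℕ`. -/
abbrev Seq (d : ℕ) := ℕ → RV d

variable (d : ℕ)


/-- The first `t` coordinates of a sequence. -/
def prefixMap (t : ℕ) : Seq d → (Fin t → RV d) := fun ω s => ω s

/-- The law of the first `t` coordinates under a sequential law `μ`. -/
def prefixLaw (μ : Measure (Seq d)) (t : ℕ) : Measure (Fin t → RV d) :=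
  μ.map (prefixMap d t)

/-- The natural filtration of the coordinate process: `ℱ t = σ(X_0, …, X_{t-1})`. -/
def F : Filtration ℕ (inferInstance : MeasurableSpace (Seq d)) where
  seq t := ⨆ s ∈ Finset.range t, MeasurableSpace.comap (fun ω : Seq d => ω s) inferInstance
  mono' := by
    intro i j hij
    exact biSup_mono fun s hs => Finset.mem_range.mpr
      (lt_of_lt_of_le (Finset.mem_range.mp hs) hij)
  le' := by
    intro t
    refine iSup₂_le fun s _ => ?_
    exact measurable_iff_comap_le.mp (measurable_pi_apply s)

/-- Local absolute continuity of sequential laws: every prefix law of `μ` is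
absolutely continuous w.r.t. the corresponding prefix law of `Γ`. -/
def LocAC (μ Γ : Measure (Seq d)) : Prop := ∀ t, prefixLaw d μ t ≪ prefixLaw d Γ t

/-- The density (likelihood-ratio) process `Z_t^μ = d(μ|_t)/d(Γ|_t)` evaluated along the path. -/
def Z (μ Γ : Measure (Seq d)) (t : ℕ) (ω : Seq d) : ℝ :=
  ((prefixLaw d μ t).rnDeriv (prefixLaw d Γ t) (prefixMap d t ω)).toReal

/-- The standard Gaussian measure on `ℝ^d`. -/
def stdGaussian : Measure (RV d) := Measure.pi fun _ => gaussianReal 0 1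

/-- `Γ` is the law of an i.i.d. sequence of standard Gaussians: characterized through its
finite-dimensional rectangle probabilities. -/
def IsGamma (Γ : Measure (Seq d)) : Prop :=
  IsProbabilityMeasure Γ ∧
    ∀ (t : ℕ) (A : Fin t → Set (RV d)), (∀ s, MeasurableSet (A s)) →
      prefixLaw d Γ t (Set.univ.pi A) = ∏ s, stdGaussian d (A s)

/-- `M` is a nonnegative supermartingale for the sequential law `μ`
(w.r.t. the natural filtration). -/
def IsNSM (μ : Measure (Seq d)) (M : ℕ → Seq d → ℝ) : Prop :=
  (∀ t ω, 0 ≤ M t ω) ∧ Supermartingale M (F d) μ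

/-- `M` is a nonnegative martingale for the sequential law `μ`. -/
def IsNM (μ : Measure (Seq d)) (M : ℕ → Seq d → ℝ) : Prop :=
  (∀ t ω, 0 ≤ M t ω) ∧ Martingale M (F d) μ


/-- `R` is the `(s,h)`-fork-convex combination of `P` with `Q` (relative to the
reference law `Γ`), described through its density process. -/
def IsFCC (Γ P Q : Measure (Seq d)) (s : ℕ) (h : Seq d → ℝ) (R : Measure (Seq d)) : Prop :=
  IsProbabilityMeasure P ∧ IsProbabilityMeasure Q ∧ LocAC d P Γ ∧ LocAC d Q Γ ∧
  Measurable[F d s] h ∧ (∀ ω, h ω ∈ Set.Icc (0 : ℝ) 1) ∧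
  Γ {ω | h ω < 1 ∧ Z d Q Γ s ω = 0} = 0 ∧
  IsProbabilityMeasure R ∧ LocAC d R Γ ∧
  ∀ t : ℕ, (fun ω => Z d R Γ t ω) =ᵐ[Γ]
    (fun ω => if t ≤ s then Z d P Γ t ω
      else h ω * Z d P Γ t ω + (1 - h ω) * Z d Q Γ t ω * (Z d P Γ s ω / Z d Q Γ s ω))

/-- A set of sequential laws is fork-convex if it is closed under fork-convex combinations. -/
def IsForkConvex (Γ : Measure (Seq d)) (S : Set (Measure (Seq d))) : Prop :=
  ∀ P ∈ S, ∀ Q ∈ S, ∀ (s : ℕ) (h : Seq d → ℝ) (R : Measure (Seq d)),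
    IsFCC d Γ P Q s h R → R ∈ S

/-- The fork-convex hull: the smallest fork-convex set containing `𝔓`. -/
def fconv (Γ : Measure (Seq d)) (𝔓 : Set (Measure (Seq d))) : Set (Measure (Seq d)) :=
  ⋂₀ {S | 𝔓 ⊆ S ∧ IsForkConvex d Γ S}

/-- Convergence of sequential laws: the density processes converge in `L¹(Γ)` at every fixed time. -/
def TendstoLocL1 (Γ : Measure (Seq d)) (Pn : ℕ → Measure (Seq d)) (P : Measure (Seq d)) : Prop :=
  ∀ t, Tendsto (fun n => ∫ ω, |Z d (Pn n) Γ t ω - Z d P Γ t ω| ∂Γ) atTop (nhds 0)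

/-- The closed fork-convex hull: the closure of the fork-convex hull under local `L¹(Γ)`
convergence of density processes. -/
def clfconv (Γ : Measure (Seq d)) (𝔓 : Set (Measure (Seq d))) : Set (Measure (Seq d)) :=
  {P | IsProbabilityMeasure P ∧ LocAC d P Γ ∧
    ∃ Pn : ℕ → Measure (Seq d), (∀ n, Pn n ∈ fconv d Γ 𝔓) ∧ TendstoLocL1 d Γ Pn P}

/-- `μ` is the law of an i.i.d. sequence with marginal `P`. -/
def IsIIDLaw (μ : Measure (Seq d)) (P : Measure (RV d)) : Prop :=
  IsProbabilityMeasure μ ∧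
    ∀ (t : ℕ) (A : Fin t → Set (RV d)), (∀ s, MeasurableSet (A s)) →
      prefixLaw d μ t (Set.univ.pi A) = ∏ s, P (A s)

/-- `μ` is the law of an independent sequence with marginals `Ps 0, Ps 1, …`. -/
def IsProductLaw (μ : Measure (Seq d)) (Ps : ℕ → Measure (RV d)) : Prop :=
  IsProbabilityMeasure μ ∧
    ∀ (t : ℕ) (A : Fin t → Set (RV d)), (∀ s, MeasurableSet (A s)) →
      prefixLaw d μ t (Set.univ.pi A) = ∏ s : Fin t, Ps s (A s)

/-- The set of i.i.d. sequential laws with marginals in `PP`. -/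
def iidLaws (PP : Set (Measure (RV d))) : Set (Measure (Seq d)) :=
  {μ | ∃ P ∈ PP, IsIIDLaw d μ P}

/-- The set of independent-product sequential laws with all marginals in `PP`. -/
def productLaws (PP : Set (Measure (RV d))) : Set (Measure (Seq d)) :=
  {μ | ∃ Ps : ℕ → Measure (RV d), (∀ t, Ps t ∈ PP) ∧ IsProductLaw d μ Ps}




/-- The density of the `d`-dimensional Gaussian with mean `m` and covariance matrix `S`. -/
def gaussDensityFn (m : RV d) (S : Matrix (Fin d) (Fin d) ℝ) (x : RV d) : ℝ :=
  (2 * Real.pi) ^ (-(d : ℝ) / 2) * S.det ^ (-(1 : ℝ) / 2) *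
    Real.exp (-(1 / 2) * ((x - m) ⬝ᵥ (S⁻¹ *ᵥ (x - m))))

/-- A finite mixture of nondegenerate Gaussian densities. -/
def IsGaussianMixture (g : RV d → ℝ) : Prop :=
  ∃ (k : ℕ) (α : Fin k → ℝ) (ms : Fin k → RV d) (Ss : Fin k → Matrix (Fin d) (Fin d) ℝ),
    (∀ i, 0 ≤ α i) ∧ (∑ i, α i = 1) ∧ (∀ i, (Ss i).PosDef) ∧
    g = fun x => ∑ i, α i * gaussDensityFn d (ms i) (Ss i) x

/-- A log-concave nonnegative function on `ℝ^d`. -/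
def IsLogConcaveFn (p : RV d → ℝ) : Prop :=
  (∀ x, 0 ≤ p x) ∧
    ∀ (x y : RV d) (l : ℝ), 0 ≤ l → l ≤ 1 →
      p x ^ l * p y ^ (1 - l) ≤ p (l • x + (1 - l) • y)

/-- A log-concave probability density on `ℝ^d`. -/
def IsLogConcaveDensity (p : RV d → ℝ) : Prop :=
  Measurable p ∧ IsLogConcaveFn d p ∧ ∫ x, p x = 1

/-- The set `𝓛` of laws on `ℝ^d` with a log-concave Lebesgue density. -/
def logConcaveLaws : Set (Measure (RV d)) :=
  {P | IsProbabilityMeasure P ∧ ∃ p : RV d → ℝ, Measurable p ∧ IsLogConcaveFn d p ∧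
    P = volume.withDensity fun x => ENNReal.ofReal (p x)}

/-- The set `𝒢` of nondegenerate Gaussian laws on `ℝ^d`. -/
def gaussianLaws : Set (Measure (RV d)) :=
  {P | ∃ (m : RV d) (S : Matrix (Fin d) (Fin d) ℝ), S.PosDef ∧
    P = volume.withDensity fun x => ENNReal.ofReal (gaussDensityFn d m S x)}

/-- An estimator sequence: a measurable family of (strictly positive) predictable
probability density estimates. -/
def IsEstimatorSeq (E : (t : ℕ) → (Fin t → RV d) → RV d → ℝ) : Prop :=
  (∀ t, Measurable fun q : (Fin t → RV d) × RV d => E t q.1 q.2) ∧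
  (∀ t h x, 0 < E t h x) ∧ (∀ t h, ∫ x, E t h x = 1)

/-- The universal likelihood ratio (ULR) process. Time `t` corresponds to having observed
the `t` samples `ω 0, …, ω (t-1)`. -/
def ULR (E : (t : ℕ) → (Fin t → RV d) → RV d → ℝ) (t : ℕ) (ω : Seq d) : ℝ :=
  if t ≤ d then 1 else
    (∏ j ∈ Finset.Ico d t, E j (fun i : Fin j => ω i) (ω j)) /
      ⨆ p : {p : RV d → ℝ // IsLogConcaveDensity d p}, ∏ j ∈ Finset.Ico d t, p.1 (ω j)

/-- The prediction (cumulative log-loss) regret of the estimator sequence `E` relative to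
the density of `P`. -/
def regret (P : Measure (RV d)) (E : (t : ℕ) → (Fin t → RV d) → RV d → ℝ)
    (t : ℕ) (ω : Seq d) : ℝ :=
  ∑ j ∈ Finset.range t,
    (Real.log ((P.rnDeriv volume (ω j)).toReal) - Real.log (E j (fun i : Fin j => ω i) (ω j)))

/-- The Hellinger distance between two laws on `ℝ^d` (via their Lebesgue densities). -/
def hellinger (P Q : Measure (RV d)) : ℝ :=
  Real.sqrt ((1 / 2) *
    ∫ x, (Real.sqrt ((P.rnDeriv volume x).toReal) - Real.sqrt ((Q.rnDeriv volume x).toReal)) ^ 2)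

/-- The Hellinger distance from `P` to the class of log-concave laws. -/
def dHLC (P : Measure (RV d)) : ℝ :=
  sInf {r | ∃ L ∈ logConcaveLaws d, r = hellinger d P L}

/-- The Kullback–Leibler divergence. -/
def klDivR {α : Type*} [MeasurableSpace α] (P Q : Measure α) : EReal :=
  if P ≪ Q ∧ Integrable (fun x => Real.log ((P.rnDeriv Q x).toReal)) P
  then ((∫ x, Real.log ((P.rnDeriv Q x).toReal) ∂P : ℝ) : EReal) else ⊤

/-- Membership in `𝒟₁`. -/
def MemD1 (P : Measure (RV d)) : Prop :=
  IsProbabilityMeasure P ∧ P ≪ volume ∧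
  Integrable (fun x => max 0 (Real.log ((P.rnDeriv volume x).toReal))) P ∧
  Integrable (fun x => Real.sqrt (∑ i, (x i) ^ 2)) P

/-- The log-likelihood gap `σ_t(P)` between the true density and the log-concave maximum
likelihood. -/
def sigmaT (P : Measure (RV d)) (t : ℕ) (ω : Seq d) : ℝ :=
  (∑ j ∈ Finset.range t, Real.log ((P.rnDeriv volume (ω j)).toReal)) -
    ⨆ p : {p : RV d → ℝ // IsLogConcaveDensity d p},
      ∑ j ∈ Finset.range t, Real.log (p.1 (ω j))

/-- The mean vector of `P`. -/
def meanVec (P : Measure (RV d)) : RV d := fun i => ∫ x, x i ∂P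

/-- `Δ_P = min_{‖v‖=1} E_P |⟨v, X − E_P X⟩|`. -/
def DeltaP (P : Measure (RV d)) : ℝ :=
  sInf {r | ∃ v : RV d, (∑ i, (v i) ^ 2) = 1 ∧
    r = ∫ x, |∑ i, v i * (x i - meanVec d P i)| ∂P}

/-- The class `𝒟_{Box,Lip,B}`: laws with a `1`-Lipschitz density supported on `[-1,1]^d`
taking values in `[1/B, B]` there. -/
def DBoxLip (B : ℝ) : Set (Measure (RV d)) :=
  {P | IsProbabilityMeasure P ∧ ∃ p : RV d → ℝ, Measurable p ∧
    P = volume.withDensity (fun x => ENNReal.ofReal (p x)) ∧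
    (∀ x, ¬ (∀ i, |x i| ≤ 1) → p x = 0) ∧
    (∀ x, (∀ i, |x i| ≤ 1) → 1 / B ≤ p x ∧ p x ≤ B) ∧
    (∀ x y, (∀ i, |x i| ≤ 1) → (∀ i, |y i| ≤ 1) →
      |p x - p y| ≤ Real.sqrt (∑ i, (x i - y i) ^ 2))}



theorem lintegral_pi_fin_prod {X : Type*} [MeasurableSpace X] :
    ∀ {n : ℕ} (μ : Fin n → Measure X) [∀ i, SigmaFinite (μ i)] (f : Fin n → X → ENNReal),
      (∀ i, Measurable (f i)) →
      ∫⁻ x, ∏ i, f i (x i) ∂(Measure.pi μ) = ∏ i, ∫⁻ x, f i x ∂(μ i)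
  | 0, μ, _, f, _ => by simp
  | n + 1, μ, _, f, hf => by
    have hmp := (measurePreserving_piFinSuccAbove μ 0).symm
    rw [← hmp.lintegral_comp_emb (MeasurableEquiv.measurableEmbedding _)]
    simp only [MeasurableEquiv.piFinSuccAbove_symm_apply, Fin.insertNthEquiv,
      Equiv.coe_fn_mk, Fin.prod_univ_succ, Fin.insertNth_zero, Fin.cons_zero, Fin.cons_succ,
      Fin.zero_succAbove, cast_eq]
    rw [lintegral_prod_mul (f := f 0) (g := fun y : Fin n → X => ∏ i, f i.succ (y i))
      (hf 0).aemeasurable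
      (Finset.measurable_prod _ fun i _ => (hf i.succ).comp (measurable_pi_apply i)).aemeasurable,
      lintegral_pi_fin_prod (fun i : Fin n => μ i.succ) (fun i => f i.succ) fun i => hf i.succ]

theorem pi_withDensity {X : Type*} [MeasurableSpace X] {n : ℕ} (μ : Fin n → Measure X)
    [∀ i, SigmaFinite (μ i)] (f : Fin n → X → ENNReal) (hf : ∀ i, Measurable (f i))
    [∀ i, SigmaFinite ((μ i).withDensity (f i))] :
    Measure.pi (fun i => (μ i).withDensity (f i)) =
      (Measure.pi μ).withDensity fun x => ∏ i, f i (x i) := by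
  refine Measure.pi_eq fun s hs => ?_
  rw [withDensity_apply _ (.univ_pi hs), ← lintegral_indicator (.univ_pi hs)]
  have key : ∀ x : Fin n → X, (Set.univ.pi s).indicator (fun x => ∏ i, f i (x i)) x =
      ∏ i, (s i).indicator (f i) (x i) := by
    intro x
    by_cases hx : x ∈ Set.univ.pi s
    · rw [Set.indicator_of_mem hx]
      exact Finset.prod_congr rfl fun i _ => (Set.indicator_of_mem (hx i trivial) _).symm
    · rw [Set.indicator_of_notMem hx]
      obtain ⟨i, hi⟩ : ∃ i, x i ∉ s i := by simpa using hx
      exact (Finset.prod_eq_zero (Finset.mem_univ i) (Set.indicator_of_notMem hi _)).symm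
  simp_rw [key]
  rw [lintegral_pi_fin_prod μ _ fun i => (hf i).indicator (hs i)]
  exact Finset.prod_congr rfl fun i _ => by
    rw [lintegral_indicator (hs i), withDensity_apply _ (hs i)]

/-- If the averages of `f` over small scaled copies of `γ` centred at almost every point are at
most `c`, then `f ≤ c` almost everywhere. -/
theorem ae_le_of_lintegral_scaled_le {E : Type*} [NormedAddCommGroup E] [NormedSpace ℝ E]
    [FiniteDimensional ℝ E] [MeasurableSpace E] [BorelSpace E] (ν : Measure E)
    [ν.IsAddHaarMeasure] (γ : Measure E) [IsProbabilityMeasure γ]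
    {f : E → ENNReal} (hf : Measurable f) {c : ENNReal} (hc : c ≠ ⊤) {ε : ℕ → ℝ}
    (hε : Tendsto ε atTop (nhds 0))
    (h : ∀ n, ∀ᵐ m ∂ν, ∫⁻ z, f (m + ε n • z) ∂γ ≤ c) : ∀ᵐ x ∂ν, f x ≤ c := by
  have hU : ∀ U : Set E, IsOpen U → ∫⁻ x in U, f x ∂ν ≤ c * ν U := by
    intro U hU
    have hind : Measurable (U.indicator (1 : E → ENNReal)) :=
      measurable_one.indicator hU.measurableSet
    calc ∫⁻ x in U, f x ∂ν = ∫⁻ p : E × E, U.indicator f p.1 ∂(ν.prod γ) := by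
          rw [lintegral_prod (fun p : E × E => U.indicator f p.1)
              ((hf.indicator hU.measurableSet).comp measurable_fst).aemeasurable,
            ← lintegral_indicator hU.measurableSet]
          simp
      _ ≤ ∫⁻ p : E × E, liminf (fun n => U.indicator 1 (p.1 - ε n • p.2) * f p.1) atTop
            ∂(ν.prod γ) := by
          refine lintegral_mono fun p => ?_
          by_cases hp : p.1 ∈ U
          · rw [Set.indicator_of_mem hp]
            have hlim : Tendsto (fun n => p.1 - ε n • p.2) atTop (nhds p.1) := by
              simpa using tendsto_const_nhds.sub (hε.smul_const p.2)
            refine le_liminf_of_le (by isBoundedDefault) ?_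
            filter_upwards [hlim.eventually (hU.mem_nhds hp)] with n hn
            simp [Set.indicator_of_mem hn]
          · simp [Set.indicator_of_notMem hp]
      _ ≤ liminf (fun n => ∫⁻ p : E × E, U.indicator 1 (p.1 - ε n • p.2) * f p.1 ∂(ν.prod γ))
            atTop := by
          refine lintegral_liminf_le fun n => ?_
          exact (hind.comp (by fun_prop)).mul (hf.comp measurable_fst)
      _ ≤ c * ν U := by
          refine liminf_le_of_frequently_le' (Frequently.of_forall fun n => ?_)
          calc ∫⁻ p : E × E, U.indicator 1 (p.1 - ε n • p.2) * f p.1 ∂(ν.prod γ)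
              = ∫⁻ z, ∫⁻ x, U.indicator 1 (x - ε n • z) * f x ∂ν ∂γ :=
                lintegral_prod_symm _
                  ((hind.comp (by fun_prop)).mul (hf.comp measurable_fst)).aemeasurable
            _ = ∫⁻ z, ∫⁻ x, U.indicator 1 x * f (x + ε n • z) ∂ν ∂γ := by
                refine lintegral_congr fun z => ?_
                rw [← lintegral_add_right_eq_self _ (ε n • z)]
                simp
            _ = ∫⁻ x, ∫⁻ z, U.indicator 1 x * f (x + ε n • z) ∂γ ∂ν := by
                refine lintegral_lintegral_swap ?_
                exact ((hind.comp measurable_snd).mul (hf.comp (by fun_prop))).aemeasurable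
            _ ≤ ∫⁻ x, U.indicator 1 x * c ∂ν := by
                refine lintegral_mono_ae ?_
                filter_upwards [h n] with x hx
                rw [lintegral_const_mul _ (by fun_prop)]
                gcongr
            _ = c * ν U := by
                rw [lintegral_mul_const _ hind, lintegral_indicator_one hU.measurableSet, mul_comm]
  refine ae_le_of_forall_setLIntegral_le_of_sigmaFinite hf (g := fun _ => c) fun s hs _ => ?_
  have := Measure.OuterRegular.smul ν hc
  have hreg := s.measure_eq_iInf_isOpen (c • ν)
  rw [lintegral_const, Measure.restrict_apply_univ, ← smul_eq_mul, ← Measure.smul_apply, hreg]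
  refine le_iInf₂ fun U hsU => le_iInf fun hUo => ?_
  exact (lintegral_mono_set hsU).trans (hU U hUo)

theorem F_eq_comap (t : ℕ) :
    (F d t : MeasurableSpace (Seq d)) = MeasurableSpace.comap (prefixMap d t) inferInstance := by
  change (⨆ s ∈ Finset.range t, MeasurableSpace.comap (fun ω : Seq d => ω s) inferInstance) =
    MeasurableSpace.comap (prefixMap d t) (⨆ i, MeasurableSpace.comap (fun x => x i) inferInstance)
  simp only [MeasurableSpace.comap_iSup, MeasurableSpace.comap_comp]
  refine le_antisymm (iSup₂_le fun s hs => ?_) (iSup_le fun i => ?_)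
  · exact le_iSup (fun i : Fin t => MeasurableSpace.comap
      ((fun x : Fin t → RV d => x i) ∘ prefixMap d t) inferInstance) ⟨s, Finset.mem_range.mp hs⟩
  · exact le_iSup₂ (f := fun s (_ : s ∈ Finset.range t) =>
      MeasurableSpace.comap (fun ω : Seq d => ω s) inferInstance) i.1 (Finset.mem_range.mpr i.2)

theorem measurable_prefixMap (t : ℕ) : Measurable (prefixMap d t) :=
  measurable_pi_lambda _ fun s => measurable_pi_apply s.1

variable {d} in
theorem IsIIDLaw.map_prefixMap {μ : Measure (Seq d)} {P : Measure (RV d)}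
    [IsProbabilityMeasure P] (h : IsIIDLaw d μ P) (t : ℕ) :
    MeasurePreserving (prefixMap d t) μ (Measure.pi fun _ => P) :=
  ⟨measurable_prefixMap d t, (Measure.pi_eq fun s hs => h.2 t s hs).symm⟩

theorem piFinSuccAbove_last_prefixMap (t : ℕ) (ω : Seq d) :
    MeasurableEquiv.piFinSuccAbove (fun _ => RV d) (Fin.last t) (prefixMap d (t + 1) ω) =
      (ω t, prefixMap d t ω) := by
  refine Prod.ext ?_ ?_
  · simp [prefixMap]
  · funext i
    simp [prefixMap, MeasurableEquiv.piFinSuccAbove, Fin.insertNthEquiv, Fin.init]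

theorem isIIDLaw_infinitePi (P : Measure (RV d)) [IsProbabilityMeasure P] :
    IsIIDLaw d (Measure.infinitePi fun _ => P) P := by
  refine ⟨inferInstance, fun t A hA => ?_⟩
  have hpre : prefixMap d t ⁻¹' (Set.univ.pi A) =
      Set.pi (Finset.range t : Set ℕ) fun s => if hs : s < t then A ⟨s, hs⟩ else Set.univ := by
    ext ω
    simp only [Set.mem_preimage, Set.mem_pi, Set.mem_univ, true_imp_iff, prefixMap,
      Finset.coe_range, Set.mem_Iio]
    refine ⟨fun h s hs => ?_, fun h s => ?_⟩
    · simpa [hs] using h ⟨s, hs⟩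
    · simpa using h s s.2
  rw [prefixLaw, Measure.map_apply (measurable_prefixMap d t) (.univ_pi hA), hpre,
    Measure.infinitePi_pi]
  · rw [← Fin.prod_univ_eq_prod_range
      (fun s => P (if hs : s < t then A ⟨s, hs⟩ else Set.univ)) t]
    simp
  · intro s hs
    simp only [Finset.mem_range.mp hs, dif_pos]
    exact hA _

variable {d} in
theorem IsIIDLaw.map_last_prefix {μ : Measure (Seq d)} {P : Measure (RV d)}
    [IsProbabilityMeasure P] (h : IsIIDLaw d μ P) (t : ℕ) :
    MeasurePreserving (fun ω : Seq d => (ω t, prefixMap d t ω)) μ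
      (P.prod (Measure.pi fun _ : Fin t => P)) := by
  have := (measurePreserving_piFinSuccAbove (fun _ : Fin (t + 1) => P) (Fin.last t)).comp
    (h.map_prefixMap (t + 1))
  convert! this using 1
  funext ω
  exact (piFinSuccAbove_last_prefixMap d t ω).symm

/-- The law of a vector with independent Gaussian coordinates of common variance `v`. -/
def isoGaussian (m : RV d) (v : NNReal) : Measure (RV d) :=
  Measure.pi fun i => gaussianReal (m i) v

instance (m : RV d) (v : NNReal) : IsProbabilityMeasure (isoGaussian d m v) := by
  unfold isoGaussian
  infer_instance

theorem isoGaussian_eq_withDensity (m : RV d) {v : NNReal} (hv : v ≠ 0) :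
    isoGaussian d m v = volume.withDensity fun x => ∏ i, gaussianPDF (m i) v (x i) := by
  have : ∀ i, gaussianReal (m i) v = volume.withDensity (gaussianPDF (m i) v) :=
    fun i => gaussianReal_of_var_ne_zero _ hv
  have : ∀ i, SigmaFinite ((volume : Measure ℝ).withDensity (gaussianPDF (m i) v)) :=
    fun i => this i ▸ inferInstance
  unfold isoGaussian
  simp_rw [gaussianReal_of_var_ne_zero _ hv]
  rw [pi_withDensity _ _ fun i => measurable_gaussianPDF _ _, volume_pi]

theorem isoGaussian_eq_withDensity_ofReal (m : RV d) {v : NNReal} (hv : v ≠ 0) :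
    isoGaussian d m v =
      volume.withDensity fun x => ENNReal.ofReal (∏ i, gaussianPDFReal (m i) v (x i)) := by
  rw [isoGaussian_eq_withDensity d m hv]
  congr 1
  funext x
  rw [ENNReal.ofReal_prod_of_nonneg fun i _ => gaussianPDFReal_nonneg _ _ _]
  rfl

theorem gaussDensityFn_smul_one (m : RV d) {v : NNReal} (hv : v ≠ 0) (x : RV d) :
    gaussDensityFn d m ((v : ℝ) • (1 : Matrix (Fin d) (Fin d) ℝ)) x =
      ∏ i, gaussianPDFReal (m i) v (x i) := by
  have hv' : (0 : ℝ) < v := by positivity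
  have hinv : ((v : ℝ) • (1 : Matrix (Fin d) (Fin d) ℝ))⁻¹ = (v : ℝ)⁻¹ • 1 := by
    refine Matrix.inv_eq_right_inv ?_
    simp [smul_smul, hv'.ne']
  have hconst : (2 * Real.pi) ^ (-(d : ℝ) / 2) * ((v : ℝ) ^ d) ^ (-(1 : ℝ) / 2) =
      (√(2 * Real.pi * v))⁻¹ ^ d := by
    rw [Real.sqrt_eq_rpow, ← Real.rpow_neg (by positivity), ← Real.rpow_natCast (v : ℝ),
      ← Real.rpow_mul hv'.le, ← Real.rpow_natCast, ← Real.rpow_mul (by positivity),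
      Real.mul_rpow (by positivity) hv'.le]
    ring_nf
  simp only [gaussDensityFn, gaussianPDFReal, hinv, Matrix.det_smul, Matrix.det_one, mul_one,
    Fintype.card_fin, hconst, Finset.prod_mul_distrib, Finset.prod_const, Finset.card_univ,
    ← Real.exp_sum]
  congr 2
  simp only [Matrix.smul_mulVec, Matrix.one_mulVec, dotProduct, Pi.smul_apply, smul_eq_mul,
    Pi.sub_apply, Finset.mul_sum]
  refine Finset.sum_congr rfl fun i _ => ?_
  field_simp

theorem isoGaussian_mem_gaussianLaws (m : RV d) {v : NNReal} (hv : v ≠ 0) :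
    isoGaussian d m v ∈ gaussianLaws d := by
  refine ⟨m, (v : ℝ) • 1, Matrix.PosDef.one.smul (by positivity), ?_⟩
  simp_rw [gaussDensityFn_smul_one d m hv]
  exact isoGaussian_eq_withDensity_ofReal d m hv

theorem gaussianPDFReal_rpow_mul_rpow_le (m : ℝ) (v : NNReal) (x y l : ℝ) (h0 : 0 ≤ l)
    (h1 : l ≤ 1) :
    gaussianPDFReal m v x ^ l * gaussianPDFReal m v y ^ (1 - l) ≤
      gaussianPDFReal m v (l * x + (1 - l) * y) := by
  rcases eq_or_ne v 0 with rfl | hv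
  · rcases eq_or_ne l 0 with rfl | hl
    · simp
    · simp [Real.zero_rpow hl]
  have hv' : (0 : ℝ) < v := by positivity
  have hc : 0 < (√(2 * Real.pi * v))⁻¹ := by positivity
  simp only [gaussianPDFReal]
  rw [Real.mul_rpow hc.le (Real.exp_nonneg _), Real.mul_rpow hc.le (Real.exp_nonneg _),
    ← Real.exp_mul, ← Real.exp_mul, mul_mul_mul_comm, ← Real.rpow_add hc, ← Real.exp_add,
    add_sub_cancel, Real.rpow_one]
  gcongr
  rw [div_mul_eq_mul_div, div_mul_eq_mul_div, ← add_div]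
  gcongr
  nlinarith [mul_nonneg (mul_nonneg h0 (sub_nonneg.2 h1)) (sq_nonneg (x - y))]

theorem isoGaussian_mem_logConcaveLaws (m : RV d) {v : NNReal} (hv : v ≠ 0) :
    isoGaussian d m v ∈ logConcaveLaws d := by
  refine ⟨inferInstance, fun x => ∏ i, gaussianPDFReal (m i) v (x i), by fun_prop,
    ⟨fun x => Finset.prod_nonneg fun i _ => gaussianPDFReal_nonneg _ _ _, fun x y l h0 h1 => ?_⟩,
    isoGaussian_eq_withDensity_ofReal d m hv⟩
  rw [← Real.finsetProd_rpow _ _ fun i _ => gaussianPDFReal_nonneg _ _ _,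
    ← Real.finsetProd_rpow _ _ fun i _ => gaussianPDFReal_nonneg _ _ _, ← Finset.prod_mul_distrib]
  refine Finset.prod_le_prod (fun i _ => ?_) fun i _ => ?_
  · have := gaussianPDFReal_nonneg (m i) v
    exact mul_nonneg (Real.rpow_nonneg (this _) _) (Real.rpow_nonneg (this _) _)
  · exact gaussianPDFReal_rpow_mul_rpow_le (m i) v (x i) (y i) l h0 h1

theorem stdGaussian_eq_isoGaussian : stdGaussian d = isoGaussian d 0 1 := rfl

theorem isoGaussian_eq_map (m : RV d) (r : ℝ) :
    isoGaussian d m (r ^ 2).toNNReal = (stdGaussian d).map fun z => m + r • z := by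
  have := Measure.pi_map_pi (μ := fun _ : Fin d => gaussianReal 0 1)
    (f := fun i z => m i + r * z) (fun i => by fun_prop)
  change _ = (Measure.pi fun _ : Fin d => gaussianReal 0 1).map fun z i => m i + r * z i
  rw [this]
  unfold isoGaussian
  congr 1
  funext i
  have h := (Measure.map_map (μ := gaussianReal 0 1) (measurable_const_add (m i))
    (measurable_const_mul r)).symm
  refine Eq.symm (h.trans ?_)
  rw [gaussianReal_map_const_mul, gaussianReal_map_const_add]
  congr 1
  · simp
  · ext; simp [sq_nonneg]

theorem isoGaussian_absolutelyContinuous (m : RV d) {v : NNReal} (hv : v ≠ 0) :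
    isoGaussian d m v ≪ volume := by
  rw [isoGaussian_eq_withDensity d m hv]
  exact withDensity_absolutelyContinuous _ _

theorem pi_isoGaussian_eq_withDensity (m : RV d) {v : NNReal} (hv : v ≠ 0) (t : ℕ) :
    (Measure.pi fun _ : Fin t => isoGaussian d m v) =
      volume.withDensity fun y : Fin t → RV d =>
        ∏ s, ∏ i, gaussianPDF (m i) v (y s i) := by
  have hp : Measurable fun x : RV d => ∏ i, gaussianPDF (m i) v (x i) := by fun_prop
  have : SigmaFinite ((volume : Measure (RV d)).withDensity
      fun x => ∏ i, gaussianPDF (m i) v (x i)) :=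
    isoGaussian_eq_withDensity d m hv ▸ inferInstance
  rw [isoGaussian_eq_withDensity d m hv, pi_withDensity _ _ fun _ => hp]
  rfl

theorem pi_isoGaussian_absolutelyContinuous (m : RV d) {v : NNReal} (hv : v ≠ 0) (t : ℕ) :
    (Measure.pi fun _ : Fin t => isoGaussian d m v) ≪ volume := by
  rw [pi_isoGaussian_eq_withDensity d m hv]
  exact withDensity_absolutelyContinuous _ _

theorem volume_absolutelyContinuous_pi_isoGaussian (m : RV d) {v : NNReal} (hv : v ≠ 0) (t : ℕ) :
    volume ≪ (Measure.pi fun _ : Fin t => isoGaussian d m v) := by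
  rw [pi_isoGaussian_eq_withDensity d m hv]
  refine withDensity_absolutelyContinuous' (Measurable.aemeasurable (by fun_prop))
    (ae_of_all _ fun y => ?_)
  exact Finset.prod_ne_zero_iff.2 fun s _ => Finset.prod_ne_zero_iff.2 fun i _ =>
    (gaussianPDF_pos (m i) hv (y s i)).ne'

variable {d}

theorem ae_lintegral_le_of_supermartingale {μ : Measure (Seq d)} {P : Measure (RV d)}
    [IsProbabilityMeasure P] (hμ : IsIIDLaw d μ P) {M : ℕ → Seq d → ℝ} (hM : IsNSM d μ M)
    {t : ℕ} {f : RV d × (Fin t → RV d) → ℝ} (hf : Measurable f) {g : (Fin t → RV d) → ℝ}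
    (hg : Measurable g) (hfM : ∀ ω, M (t + 1) ω = f (ω t, prefixMap d t ω))
    (hgM : ∀ ω, M t ω = g (prefixMap d t ω)) :
    ∀ᵐ y ∂(Measure.pi fun _ : Fin t => P),
      ∫⁻ x, ENNReal.ofReal (f (x, y)) ∂P ≤ ENNReal.ofReal (g y) := by
  have := hμ.1
  refine ae_le_of_forall_setLIntegral_le_of_sigmaFinite ?_ fun s hs _ => ?_
  · exact Measurable.lintegral_prod_left' (f := fun p => ENNReal.ofReal (f p)) (by fun_prop)
  have hsF : MeasurableSet[F d t] (prefixMap d t ⁻¹' s) := by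
    rw [F_eq_comap]
    exact ⟨s, hs, rfl⟩
  have hint : ∀ k, ENNReal.ofReal (∫ ω in prefixMap d t ⁻¹' s, M k ω ∂μ) =
      ∫⁻ ω in prefixMap d t ⁻¹' s, ENNReal.ofReal (M k ω) ∂μ := fun k =>
    ofReal_integral_eq_lintegral_ofReal (hM.2.integrable k).integrableOn
      (ae_of_all _ fun ω => hM.1 k ω)
  have hle := ENNReal.ofReal_le_ofReal (hM.2.setIntegral_le (Nat.le_succ t) hsF)
  rw [hint, hint] at hle
  convert! hle using 1
  · have hpre : prefixMap d t ⁻¹' s =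
        (fun ω : Seq d => (ω t, prefixMap d t ω)) ⁻¹' (Set.univ ×ˢ s) := by ext; simp
    simp_rw [Nat.succ_eq_add_one, hfM]
    rw [hpre, (hμ.map_last_prefix t).setLIntegral_comp_preimage
      (f := fun p => ENNReal.ofReal (f p)) (MeasurableSet.univ.prod hs) (by fun_prop),
      ← Measure.prod_restrict, Measure.restrict_univ, lintegral_prod_symm _ (by fun_prop)]
  · simp_rw [hgM]
    rw [(hμ.map_prefixMap t).setLIntegral_comp_preimage hs (f := fun y => ENNReal.ofReal (g y))
      (by fun_prop)]

theorem ae_succ_le_of_isNSM {Γ : Measure (Seq d)} (hΓ : IsGamma d Γ) {M : ℕ → Seq d → ℝ}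
    (hM : ∀ (m : RV d) (v : NNReal), v ≠ 0 → ∀ μ, IsIIDLaw d μ (isoGaussian d m v) →
      IsNSM d μ M) (t : ℕ) :
    ∀ᵐ ω ∂Γ, M (t + 1) ω ≤ M t ω := by
  have hΓ' : IsIIDLaw d Γ (isoGaussian d 0 1) := hΓ
  have hMΓ := hM 0 1 one_ne_zero Γ hΓ'
  have hfac : ∀ k, ∃ h : (Fin k → RV d) → ℝ, Measurable h ∧ M k = h ∘ prefixMap d k := fun k => by
    have := hMΓ.2.stronglyMeasurable k
    rw [F_eq_comap] at this
    exact this.measurable.exists_eq_measurable_comp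
  obtain ⟨g, hg, hgM⟩ := hfac t
  obtain ⟨f₀, hf₀, hfM⟩ := hfac (t + 1)
  obtain ⟨f, hf, hfM⟩ : ∃ f : RV d × (Fin t → RV d) → ℝ, Measurable f ∧
      ∀ ω, M (t + 1) ω = f (ω t, prefixMap d t ω) := by
    let e := MeasurableEquiv.piFinSuccAbove (fun _ : Fin (t + 1) => RV d) (Fin.last t)
    refine ⟨f₀ ∘ e.symm, hf₀.comp e.symm.measurable, fun ω => ?_⟩
    have : e (prefixMap d (t + 1) ω) = (ω t, prefixMap d t ω) :=
      piFinSuccAbove_last_prefixMap d t ω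
    rw [hfM, ← this]
    simp
  let ε : ℕ → ℝ := fun n => 1 / ((n : ℝ) + 1)
  have hε : ∀ n, 0 < ε n := fun n => Nat.one_div_pos_of_nat
  have hmeas : ∀ r : ℝ, Measurable fun q : RV d × (Fin t → RV d) =>
      ∫⁻ z, ENNReal.ofReal (f (q.1 + r • z, q.2)) ∂(stdGaussian d) := fun r => by
    rw [stdGaussian_eq_isoGaussian]
    exact Measurable.lintegral_prod_right' (ν := isoGaussian d 0 1)
      (f := fun p : (RV d × (Fin t → RV d)) × RV d =>
        ENNReal.ofReal (f (p.1.1 + r • p.2, p.1.2))) (by fun_prop)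
  have hbound : ∀ n, ∀ m : RV d, ∀ᵐ y : Fin t → RV d,
      ∫⁻ z, ENNReal.ofReal (f (m + ε n • z, y)) ∂(stdGaussian d) ≤ ENNReal.ofReal (g y) := by
    intro n m
    have hv : (ε n ^ 2).toNNReal ≠ 0 := by
      have := hε n
      simp [this.ne']
    have h := ae_lintegral_le_of_supermartingale (isIIDLaw_infinitePi d _)
      (hM m _ hv _ (isIIDLaw_infinitePi d _)) hf hg hfM fun ω => congrFun hgM ω
    filter_upwards [(volume_absolutelyContinuous_pi_isoGaussian d m hv t).ae_le h] with y hy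
    rwa [isoGaussian_eq_map, lintegral_map (by fun_prop) (by fun_prop)] at hy
  have hswap : ∀ᵐ y : Fin t → RV d, ∀ n, ∀ᵐ m : RV d,
      ∫⁻ z, ENNReal.ofReal (f (m + ε n • z, y)) ∂(stdGaussian d) ≤ ENNReal.ofReal (g y) := by
    refine ae_all_iff.2 fun n => (Measure.ae_ae_comm ?_).1 (ae_of_all _ (hbound n))
    exact measurableSet_le (hmeas (ε n)) (by fun_prop)
  have : IsProbabilityMeasure (stdGaussian d) := stdGaussian_eq_isoGaussian d ▸ inferInstance
  have hle : ∀ᵐ y : Fin t → RV d, ∀ᵐ x : RV d,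
      ENNReal.ofReal (f (x, y)) ≤ ENNReal.ofReal (g y) := by
    filter_upwards [hswap] with y hy
    exact ae_le_of_lintegral_scaled_le volume (stdGaussian d)
      (f := fun x => ENNReal.ofReal (f (x, y))) (by fun_prop) ENNReal.ofReal_ne_top
      tendsto_one_div_add_atTop_nhds_zero_nat hy
  have hset : MeasurableSet {q : RV d × (Fin t → RV d) |
      ENNReal.ofReal (f q) ≤ ENNReal.ofReal (g q.2)} := measurableSet_le (by fun_prop) (by fun_prop)
  have hprod : ∀ᵐ q ∂((volume : Measure (RV d)).prod (volume : Measure (Fin t → RV d))),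
      ENNReal.ofReal (f q) ≤ ENNReal.ofReal (g q.2) :=
    (Measure.ae_prod_iff_ae_ae hset).2 ((Measure.ae_ae_comm hset).2 hle)
  have hac := (isoGaussian_absolutelyContinuous d 0 one_ne_zero).prod
    (pi_isoGaussian_absolutelyContinuous d 0 one_ne_zero t)
  filter_upwards [(hΓ'.map_last_prefix t).quasiMeasurePreserving.ae (hac.ae_le hprod)] with ω hω
  rw [hfM, hgM]
  refine (ENNReal.ofReal_le_ofReal_iff ?_).1 hω
  exact (hMΓ.1 t ω).trans_eq (congrFun hgM ω)

theorem measure_exists_lt_eq_zero {Γ : Measure (Seq d)} (hΓ : IsGamma d Γ) {M : ℕ → Seq d → ℝ}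
    (hM : ∀ (m : RV d) (v : NNReal), v ≠ 0 → ∀ μ, IsIIDLaw d μ (isoGaussian d m v) →
      IsNSM d μ M) :
    Γ {ω | ∃ t : ℕ, 1 ≤ t ∧ M (t - 1) ω < M t ω} = 0 := by
  have h : ∀ᵐ ω ∂Γ, ¬ ∃ t : ℕ, 1 ≤ t ∧ M (t - 1) ω < M t ω := by
    filter_upwards [ae_all_iff.2 (ae_succ_le_of_isNSM hΓ hM)] with ω hω
    rintro ⟨t, ht, hlt⟩
    obtain ⟨k, rfl⟩ := Nat.exists_eq_add_of_le' ht
    exact (hω k).not_gt hlt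
  simpa using ae_iff.1 h

theorem measure_exists_ne_eq_zero {Γ : Measure (Seq d)} (hΓ : IsGamma d Γ) {M : ℕ → Seq d → ℝ}
    (hM : ∀ (m : RV d) (v : NNReal), v ≠ 0 → ∀ μ, IsIIDLaw d μ (isoGaussian d m v) →
      IsNM d μ M) :
    Γ {ω | ∃ t : ℕ, 1 ≤ t ∧ M t ω ≠ M (t - 1) ω} = 0 := by
  have hle := ae_succ_le_of_isNSM hΓ fun m v hv μ hμ =>
    ⟨(hM m v hv μ hμ).1, (hM m v hv μ hμ).2.supermartingale⟩
  have := hΓ.1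
  have hMΓ := (hM 0 1 one_ne_zero Γ hΓ).2
  have heq : ∀ t, M (t + 1) =ᵐ[Γ] M t := fun t => by
    refine (integral_eq_iff_of_ae_le (hMΓ.integrable _) (hMΓ.integrable _) (hle t)).1 ?_
    simpa using (hMΓ.setIntegral_eq (Nat.le_succ t) MeasurableSet.univ).symm
  have h : ∀ᵐ ω ∂Γ, ¬ ∃ t : ℕ, 1 ≤ t ∧ M t ω ≠ M (t - 1) ω := by
    filter_upwards [ae_all_iff.2 heq] with ω hω
    rintro ⟨t, ht, hne⟩
    obtain ⟨k, rfl⟩ := Nat.exists_eq_add_of_le' ht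
    exact hne (hω k)
  simpa using ae_iff.1 h

variable (d)

/-- There are no nontrivial test supermartingales (or martingales) for the
i.i.d. Gaussian laws, and a fortiori none for the i.i.d. log-concave laws. -/
theorem statement11 (Γ : Measure (Seq d)) (hΓ : IsGamma d Γ) (M : ℕ → Seq d → ℝ) :
    ((∀ P ∈ gaussianLaws d, ∀ μ : Measure (Seq d), IsIIDLaw d μ P → IsNSM d μ M) →
      Γ {ω | ∃ t : ℕ, 1 ≤ t ∧ M (t - 1) ω < M t ω} = 0) ∧
    ((∀ P ∈ gaussianLaws d, ∀ μ : Measure (Seq d), IsIIDLaw d μ P → IsNM d μ M) →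
      Γ {ω | ∃ t : ℕ, 1 ≤ t ∧ M t ω ≠ M (t - 1) ω} = 0) ∧
    ((∀ P ∈ logConcaveLaws d, ∀ μ : Measure (Seq d), IsIIDLaw d μ P → IsNSM d μ M) →
      Γ {ω | ∃ t : ℕ, 1 ≤ t ∧ M (t - 1) ω < M t ω} = 0) ∧
    ((∀ P ∈ logConcaveLaws d, ∀ μ : Measure (Seq d), IsIIDLaw d μ P → IsNM d μ M) →
      Γ {ω | ∃ t : ℕ, 1 ≤ t ∧ M t ω ≠ M (t - 1) ω} = 0) := by
  refine ⟨fun h => measure_exists_lt_eq_zero hΓ fun m v hv => h _ ?_,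
    fun h => measure_exists_ne_eq_zero hΓ fun m v hv => h _ ?_,
    fun h => measure_exists_lt_eq_zero hΓ fun m v hv => h _ ?_,
    fun h => measure_exists_ne_eq_zero hΓ fun m v hv => h _ ?_⟩
  · exact isoGaussian_mem_gaussianLaws d m hv
  · exact isoGaussian_mem_gaussianLaws d m hv
  · exact isoGaussian_mem_logConcaveLaws d m hv
  · exact isoGaussian_mem_logConcaveLaws d m hv

end SeqTest
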